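/- Let (X, Y) be a bivariate Gaussian random vector with mean zero, unit variances, and correlation ρ ∈ [-1, 1]. Then P(XY < 0) = arccos(ρ)/π. -/

import Mathlib

open MeasureTheory ProbabilityTheory Real

/-- The Cramér–Wold theorem in the plane: a finite measure on `ℝ × ℝ` is determined by its
images under linear forms. -/
theorem measure_prod_ext_of_map_linear {μ ν : Measure (ℝ × ℝ)} [IsFiniteMeasure μ]
    [IsFiniteMeasure ν]
    (h : ∀ a b : ℝ, μ.map (fun p => a * p.1 + b * p.2) = ν.map (fun p => a * p.1 + b * p.2)) :
    μ = ν := by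
  refine Measure.ext_of_charFunDual (funext fun L => ?_)
  have hL : (L : ℝ × ℝ → ℝ) = fun p => L (1, 0) * p.1 + L (0, 1) * p.2 := by
    funext p
    have hp : p = p.1 • ((1, 0) : ℝ × ℝ) + p.2 • ((0, 1) : ℝ × ℝ) := by ext <;> simp
    conv_lhs => rw [hp, map_add, map_smul, map_smul]
    simp only [smul_eq_mul]
    ring
  rw [charFunDual_eq_charFun_map_one, charFunDual_eq_charFun_map_one, hL, h]

/-- The law of a linear form in two independent standard Gaussian variables. -/
theorem map_linear_gaussianReal_prod (a b : ℝ) :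
    ((gaussianReal 0 1).prod (gaussianReal 0 1)).map (fun p => a * p.1 + b * p.2) =
      gaussianReal 0 (a ^ 2 + b ^ 2).toNNReal := by
  have hind : IndepFun (fun p : ℝ × ℝ => a * p.1) (fun p : ℝ × ℝ => b * p.2)
      ((gaussianReal 0 1).prod (gaussianReal 0 1)) :=
    indepFun_prod (X := fun x : ℝ => a * x) (Y := fun x : ℝ => b * x) (by fun_prop) (by fun_prop)
  have hX : ((gaussianReal 0 1).prod (gaussianReal 0 1)).map (fun p : ℝ × ℝ => a * p.1) =
      gaussianReal 0 (a ^ 2).toNNReal := by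
    rw [show (fun p : ℝ × ℝ => a * p.1) = (a * ·) ∘ Prod.fst from rfl,
      ← Measure.map_map (by fun_prop) (by fun_prop), Measure.map_fst_prod, measure_univ, one_smul,
      gaussianReal_map_const_mul, mul_zero, mul_one, Real.toNNReal_of_nonneg (sq_nonneg a)]
  have hY : ((gaussianReal 0 1).prod (gaussianReal 0 1)).map (fun p : ℝ × ℝ => b * p.2) =
      gaussianReal 0 (b ^ 2).toNNReal := by
    rw [show (fun p : ℝ × ℝ => b * p.2) = (b * ·) ∘ Prod.snd from rfl,
      ← Measure.map_map (by fun_prop) (by fun_prop), Measure.map_snd_prod, measure_univ, one_smul,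
      gaussianReal_map_const_mul, mul_zero, mul_one, Real.toNNReal_of_nonneg (sq_nonneg b)]
  rw [Real.toNNReal_add (sq_nonneg a) (sq_nonneg b)]
  simpa [Pi.add_def] using gaussianReal_add_gaussianReal_of_indepFun hind hX hY

/-- The standard Gaussian density on the plane is radial. -/
theorem gaussianPDF_mul_gaussianPDF_polar (r φ : ℝ) :
    gaussianPDF 0 1 (r * cos φ) * gaussianPDF 0 1 (r * sin φ) =
      gaussianPDF 0 1 r * gaussianPDF 0 1 0 := by
  simp only [gaussianPDF]
  rw [← ENNReal.ofReal_mul (gaussianPDFReal_nonneg _ _ _),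
    ← ENNReal.ofReal_mul (gaussianPDFReal_nonneg _ _ _)]
  congr 1
  simp only [gaussianPDFReal]
  rw [mul_mul_mul_comm, ← exp_add, mul_mul_mul_comm _ (rexp (-(r - 0) ^ 2 / _)), ← exp_add]
  congr 2
  have := sin_sq_add_cos_sq φ
  linear_combination (-r ^ 2 / 2 / ((1 : NNReal) : ℝ)) * this

/-- The standard Gaussian measure of a measurable cone is proportional to its angle. -/
theorem exists_gaussianReal_prod_cone_eq_mul :
    ∃ C : ENNReal, ∀ (A : Set (ℝ × ℝ)) (S : Set ℝ), MeasurableSet A → MeasurableSet S →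
      (∀ r φ : ℝ, 0 < r → φ ∈ Set.Ioo (-π) π → ((r * cos φ, r * sin φ) ∈ A ↔ φ ∈ S)) →
      (gaussianReal 0 1).prod (gaussianReal 0 1) A = C * volume (S ∩ Set.Ioo (-π) π) := by
  refine ⟨∫⁻ r in Set.Ioi (0 : ℝ), ENNReal.ofReal r * (gaussianPDF 0 1 r * gaussianPDF 0 1 0),
    fun A S hA hS h => ?_⟩
  have hm := measurable_gaussianPDF 0 1
  rw [gaussianReal_of_var_ne_zero _ one_ne_zero, prod_withDensity hm hm, withDensity_apply _ hA,
    ← lintegral_indicator hA, ← Measure.volume_eq_prod, ← lintegral_comp_polarCoord_symm]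
  have hcongr : ∀ p ∈ polarCoord.target,
      ENNReal.ofReal p.1 • A.indicator
          (fun z : ℝ × ℝ => gaussianPDF 0 1 z.1 * gaussianPDF 0 1 z.2) (polarCoord.symm p) =
        (ENNReal.ofReal p.1 * (gaussianPDF 0 1 p.1 * gaussianPDF 0 1 0)) *
          S.indicator 1 p.2 := by
    rintro ⟨r, φ⟩ ⟨hr, hφ⟩
    have hiff := h r φ hr hφ
    by_cases hSφ : φ ∈ S
    · simp [polarCoord, hiff.2 hSφ, hSφ, gaussianPDF_mul_gaussianPDF_polar]
    · simp [polarCoord, mt hiff.1 hSφ, hSφ]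
  rw [setLIntegral_congr_fun polarCoord.open_target.measurableSet hcongr, polarCoord_target,
    Measure.volume_eq_prod, ← Measure.prod_restrict, lintegral_prod_mul
      (f := fun r => ENNReal.ofReal r * (gaussianPDF 0 1 r * gaussianPDF 0 1 0)) (by fun_prop)
      (measurable_one.indicator hS).aemeasurable, lintegral_indicator_one hS,
    Measure.restrict_apply hS]

/-- The standard Gaussian measure of a measurable cone is its angle divided by `2π`. -/
theorem gaussianReal_prod_cone {A : Set (ℝ × ℝ)} {S : Set ℝ} (hA : MeasurableSet A)
    (hS : MeasurableSet S)
    (h : ∀ r φ : ℝ, 0 < r → φ ∈ Set.Ioo (-π) π → ((r * cos φ, r * sin φ) ∈ A ↔ φ ∈ S)) :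
    (gaussianReal 0 1).prod (gaussianReal 0 1) A =
      volume (S ∩ Set.Ioo (-π) π) / ENNReal.ofReal (2 * π) := by
  obtain ⟨C, hC⟩ := exists_gaussianReal_prod_cone_eq_mul
  have h1 := hC Set.univ Set.univ .univ .univ (by simp)
  rw [measure_univ, Set.univ_inter, Real.volume_Ioo, show π - -π = 2 * π by ring] at h1
  rw [hC A S hA hS h, ENNReal.eq_inv_of_mul_eq_one_left h1.symm, mul_comm, div_eq_mul_inv]

/-- The directions whose cosines with the directions `0` and `θ` have opposite signs. -/
theorem cos_mul_cos_sub_neg_iff {θ φ : ℝ} (hθ : θ ∈ Set.Icc 0 π) (hφ : φ ∈ Set.Ioo (-π) π) :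
    cos φ * cos (φ - θ) < 0 ↔
      φ ∈ Set.Ioo (-(π / 2)) (θ - π / 2) ∪ Set.Ioo (π / 2) (θ + π / 2) ∪
        Set.Iio (θ - 3 * π / 2) := by
  obtain ⟨hθ0, hθπ⟩ := hθ
  obtain ⟨hφ1, hφ2⟩ := hφ
  have hπ := pi_pos
  simp only [Set.mem_union, Set.mem_Ioo, Set.mem_Iio]
  rcases lt_trichotomy φ (-(π / 2)) with h | h | h
  · have hc : cos φ < 0 := by
      rw [← cos_neg]; exact cos_neg_of_pi_div_two_lt_of_lt (by linarith) (by linarith)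
    rw [mul_neg_iff]
    by_cases h' : φ < θ - 3 * π / 2
    · have : 0 < cos (φ - θ) := by
        rw [← cos_add_two_pi]; exact cos_pos_of_mem_Ioo ⟨by linarith, by linarith⟩
      simp [h', hc, this]
    · have : cos (φ - θ) ≤ 0 := by
        rw [← cos_neg]
        exact cos_nonpos_of_pi_div_two_le_of_le (by linarith) (by linarith)
      constructor
      · rintro (⟨h1, _⟩ | ⟨_, h1⟩) <;> linarith
      · rintro ((⟨h1, _⟩ | ⟨h1, _⟩) | h1) <;> linarith
  · subst h
    refine iff_of_false (by simp) ?_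
    rintro ((⟨h1, _⟩ | ⟨h1, _⟩) | h1) <;> linarith
  rcases lt_trichotomy φ (π / 2) with h2 | h2 | h2
  · have hc : 0 < cos φ := cos_pos_of_mem_Ioo ⟨by linarith, by linarith⟩
    rw [mul_neg_iff]
    by_cases h' : φ < θ - π / 2
    · have : cos (φ - θ) < 0 := by
        rw [← cos_neg]; exact cos_neg_of_pi_div_two_lt_of_lt (by linarith) (by linarith)
      simp [h', h, hc, this]
    · have : 0 ≤ cos (φ - θ) := cos_nonneg_of_mem_Icc ⟨by linarith, by linarith⟩
      constructor
      · rintro (⟨_, h1⟩ | ⟨h1, _⟩) <;> linarith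
      · rintro ((⟨_, h1⟩ | ⟨h1, _⟩) | h1) <;> linarith
  · subst h2
    refine iff_of_false (by simp) ?_
    rintro ((⟨_, h1⟩ | ⟨h1, _⟩) | h1) <;> linarith
  · have hc : cos φ < 0 := cos_neg_of_pi_div_two_lt_of_lt (by linarith) (by linarith)
    rw [mul_neg_iff]
    by_cases h' : φ < θ + π / 2
    · have : 0 < cos (φ - θ) := cos_pos_of_mem_Ioo ⟨by linarith, by linarith⟩
      simp [h', h2, hc, this]
    · have : cos (φ - θ) ≤ 0 := cos_nonpos_of_pi_div_two_le_of_le (by linarith) (by linarith)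
      constructor
      · rintro (⟨h1, _⟩ | ⟨_, h1⟩) <;> linarith
      · rintro ((⟨_, h1⟩ | ⟨_, h1⟩) | h1) <;> linarith

theorem volume_cos_mul_cos_sub_neg {θ : ℝ} (hθ : θ ∈ Set.Icc 0 π) :
    volume ({φ | cos φ * cos (φ - θ) < 0} ∩ Set.Ioo (-π) π) = ENNReal.ofReal (2 * θ) := by
  have hset : {φ | cos φ * cos (φ - θ) < 0} ∩ Set.Ioo (-π) π =
      Set.Ioo (-(π / 2)) (θ - π / 2) ∪ Set.Ioo (π / 2) (min (θ + π / 2) π) ∪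
        Set.Ioo (-π) (θ - 3 * π / 2) := by
    have hπ := pi_pos
    obtain ⟨hθ0, hθπ⟩ := id hθ
    ext φ
    constructor
    · rintro ⟨h, hφ⟩
      rcases (cos_mul_cos_sub_neg_iff hθ hφ).1 h with (h1 | h1) | h1
      · exact .inl (.inl h1)
      · exact .inl (.inr ⟨h1.1, lt_min h1.2 hφ.2⟩)
      · exact .inr ⟨hφ.1, h1⟩
    · rintro ((⟨h1, h2⟩ | ⟨h1, h2⟩) | ⟨h1, h2⟩)
      · have hφ : φ ∈ Set.Ioo (-π) π := ⟨by linarith, by linarith⟩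
        exact ⟨(cos_mul_cos_sub_neg_iff hθ hφ).2 (.inl (.inl ⟨h1, h2⟩)), hφ⟩
      · obtain ⟨h2, h3⟩ := lt_min_iff.1 h2
        have hφ : φ ∈ Set.Ioo (-π) π := ⟨by linarith, h3⟩
        exact ⟨(cos_mul_cos_sub_neg_iff hθ hφ).2 (.inl (.inr ⟨h1, h2⟩)), hφ⟩
      · have hφ : φ ∈ Set.Ioo (-π) π := ⟨h1, by linarith⟩
        exact ⟨(cos_mul_cos_sub_neg_iff hθ hφ).2 (.inr h2), hφ⟩
  have hπ := pi_pos
  obtain ⟨hθ0, hθπ⟩ := hθ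
  rw [hset, measure_union _ measurableSet_Ioo, measure_union _ measurableSet_Ioo,
    Real.volume_Ioo, Real.volume_Ioo, Real.volume_Ioo]
  · rcases le_total θ (π / 2) with h | h
    · rw [min_eq_left (by linarith), ENNReal.ofReal_of_nonpos (by linarith : θ - 3 * π / 2 - -π ≤ 0),
        add_zero, ← ENNReal.ofReal_add (by linarith) (by linarith)]
      congr 1; ring
    · rw [min_eq_right (by linarith), ← ENNReal.ofReal_add (by linarith) (by linarith),
        ← ENNReal.ofReal_add (by linarith) (by linarith)]
      congr 1; ring
  · refine Set.disjoint_left.2 fun φ h1 h2 => ?_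
    linarith [h1.2, h2.1]
  · refine Set.disjoint_left.2 fun φ h1 h2 => ?_
    rcases h1 with h1 | h1 <;> linarith [h1.1, h2.2]

/-- For a mean-zero bivariate Gaussian vector (X, Y) with unit variances and
correlation ρ ∈ [-1, 1], we have P(XY < 0) = arccos(ρ)/π. Joint Gaussianity is encoded by
requiring every linear combination a·X + b·Y to be Gaussian with mean 0 and variance
a² + 2abρ + b². -/
theorem prob_product_neg_standardized_gaussian
    {Ω : Type*} [MeasureSpace Ω] [IsProbabilityMeasure (ℙ : Measure Ω)]
    (X Y : Ω → ℝ) (hXm : Measurable X) (hYm : Measurable Y)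
    (ρ : ℝ) (hρ : ρ ∈ Set.Icc (-1 : ℝ) 1)
    (hGauss : ∀ a b : ℝ,
      Measure.map (fun ω => a * X ω + b * Y ω) ℙ =
        gaussianReal 0 (a ^ 2 + 2 * a * b * ρ + b ^ 2).toNNReal) :
    ℙ {ω | X ω * Y ω < 0} = ENNReal.ofReal (Real.arccos ρ / π) := by
  set θ := arccos ρ with hθdef
  have hθ : θ ∈ Set.Icc 0 π := ⟨arccos_nonneg ρ, arccos_le_pi ρ⟩
  have hcos : cos θ = ρ := cos_arccos hρ.1 hρ.2
  have hT : Measurable fun p : ℝ × ℝ => (p.1, cos θ * p.1 + sin θ * p.2) := by fun_prop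
  have hXY : Measurable fun ω => (X ω, Y ω) := hXm.prodMk hYm
  have := Measure.isProbabilityMeasure_map (μ := (ℙ : Measure Ω)) hXY.aemeasurable
  have := Measure.isProbabilityMeasure_map
    (μ := (gaussianReal 0 1).prod (gaussianReal 0 1)) hT.aemeasurable
  have hlaw : (ℙ : Measure Ω).map (fun ω => (X ω, Y ω)) =
      ((gaussianReal 0 1).prod (gaussianReal 0 1)).map
        (fun p : ℝ × ℝ => (p.1, cos θ * p.1 + sin θ * p.2)) := by
    refine measure_prod_ext_of_map_linear fun a b => ?_
    rw [Measure.map_map (by fun_prop) hXY, Measure.map_map (by fun_prop) hT]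
    have hlin : (fun p : ℝ × ℝ => a * p.1 + b * p.2) ∘
        (fun p : ℝ × ℝ => (p.1, cos θ * p.1 + sin θ * p.2)) =
        fun p => (a + b * cos θ) * p.1 + (b * sin θ) * p.2 := by
      funext p
      simp only [Function.comp_apply]
      ring
    rw [hlin, map_linear_gaussianReal_prod]
    refine (hGauss a b).trans ?_
    congr 2
    rw [← hcos]
    linear_combination (-b ^ 2) * sin_sq_add_cos_sq θ
  have hA : MeasurableSet {p : ℝ × ℝ | p.1 * p.2 < 0} :=
    measurableSet_lt (by fun_prop) (by fun_prop)
  have hS : MeasurableSet {φ : ℝ | cos φ * cos (φ - θ) < 0} :=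
    measurableSet_lt (by fun_prop) (by fun_prop)
  have hcone : ∀ r φ : ℝ, 0 < r → φ ∈ Set.Ioo (-π) π →
      ((r * cos φ, r * sin φ) ∈ (fun p : ℝ × ℝ => (p.1, cos θ * p.1 + sin θ * p.2)) ⁻¹'
        {p : ℝ × ℝ | p.1 * p.2 < 0} ↔ φ ∈ {φ : ℝ | cos φ * cos (φ - θ) < 0}) := by
    intro r φ hr _
    simp only [Set.mem_preimage, Set.mem_ofPred_eq]
    rw [show r * cos φ * (cos θ * (r * cos φ) + sin θ * (r * sin φ)) =
      r ^ 2 * (cos φ * cos (φ - θ)) by rw [cos_sub]; ring]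
    exact smul_neg_iff_of_pos_left (pow_pos hr 2)
  calc ℙ {ω | X ω * Y ω < 0}
      = (ℙ : Measure Ω).map (fun ω => (X ω, Y ω)) {p : ℝ × ℝ | p.1 * p.2 < 0} :=
        (Measure.map_apply hXY hA).symm
    _ = ENNReal.ofReal (2 * θ) / ENNReal.ofReal (2 * π) := by
        rw [hlaw, Measure.map_apply hT hA, gaussianReal_prod_cone (hT hA) hS hcone,
          volume_cos_mul_cos_sub_neg hθ]
    _ = ENNReal.ofReal (θ / π) := by
        rw [← ENNReal.ofReal_div_of_pos (by positivity), mul_div_mul_left _ _ two_ne_zero]
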